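/- Let U be a connected open neighborhood of 0 in ℂ⁴ and let (f, g, h, e) be holomorphic functions on U that are tangent to Q on U. Then there exist unique parameters d, κ, l, n ∈ ℝ and a, b, c, m, M, N ∈ ℂ such that on U: f(z₁,z₂,ζ,w) = a − 2·conj(c)·z₂ + i·κ·ζ + M·z₁ + m·ζ² + 2i·conj(N)·z₁·ζ + N·w, g = b + (2M − 3l)·z₂ − conj(m)·ζ + 2i·conj(N)·z₂·ζ − i·N·z₁ + i·n·ζ², h = c + (3l − conj(M))·ζ + i·conj(N)·ζ², e = d + 2i·conj(a)·ζ + 2i·conj(c)·z₁ + 2i·conj(b)·ζ² + 3l·w + 2i·conj(N)·ζ·w. Consequently, the real vector space of germs at 0 of holomorphic 4-tuples tangent to Q near 0 has dimension exactly 16. -/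

import Mathlib

open Complex ComplexConjugate Filter Topology

/-- Coordinates on `ℂ⁴`: `p 0, p 1` are `z₁, z₂`; `p 2` is `ζ`; `p 3` is `w`. -/
abbrev E4 : Type := Fin 4 → ℂ

/-- The model hypersurface `Q = {Im w = 2 Re (z₁ ζ̄) + 2 Re (z₂ ζ̄²)} ⊆ ℂ⁴`. -/
def Q : Set E4 :=
  {p | (p 3).im = 2 * (p 0 * conj (p 2)).re + 2 * (p 1 * (conj (p 2)) ^ 2).re}

/-- The 4-tuple `(f, g, h, e)` is tangent to `Q` on `U`. -/
def TangentOn (f g h e : E4 → ℂ) (U : Set E4) : Prop :=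
  ∀ p ∈ Q ∩ U,
    (e p).im = 2 * (f p * conj (p 2) + g p * (conj (p 2)) ^ 2
      + h p * (conj (p 0) + 2 * conj (p 1) * p 2)).re

/-- Parameters `d, κ, l, n ∈ ℝ`, `a, b, c, m, M, N ∈ ℂ` of an infinitesimal
automorphism of `Q`. -/
structure Params where
  d : ℝ
  κ : ℝ
  l : ℝ
  n : ℝ
  a : ℂ
  b : ℂ
  c : ℂ
  m : ℂ
  M : ℂ
  N : ℂ

/-- The `z₁`-component of the model infinitesimal automorphism. -/
def mF (P : Params) (p : E4) : ℂ :=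
  P.a - 2 * conj P.c * p 1 + I * (P.κ : ℂ) * p 2 + P.M * p 0 + P.m * (p 2) ^ 2
    + 2 * I * conj P.N * p 0 * p 2 + P.N * p 3

/-- The `z₂`-component of the model infinitesimal automorphism. -/
def mG (P : Params) (p : E4) : ℂ :=
  P.b + (2 * P.M - 3 * (P.l : ℂ)) * p 1 - conj P.m * p 2 + 2 * I * conj P.N * p 1 * p 2
    - I * P.N * p 0 + I * (P.n : ℂ) * (p 2) ^ 2

/-- The `ζ`-component of the model infinitesimal automorphism. -/
def mH (P : Params) (p : E4) : ℂ :=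
  P.c + (3 * (P.l : ℂ) - conj P.M) * p 2 + I * conj P.N * (p 2) ^ 2

/-- The `w`-component of the model infinitesimal automorphism. -/
def mE (P : Params) (p : E4) : ℂ :=
  (P.d : ℂ) + 2 * I * conj P.a * p 2 + 2 * I * conj P.c * p 0 + 2 * I * conj P.b * (p 2) ^ 2
    + 3 * (P.l : ℂ) * p 3 + 2 * I * conj P.N * p 2 * p 3

/-- Germs at `0 ∈ ℂ⁴` of complex-valued functions. -/
abbrev G4 : Type := Filter.Germ (𝓝 (0 : E4)) ℂ

/-- Germs at `0` of holomorphic 4-tuples tangent to `Q` near `0`. -/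
def tangentGerms : Set (G4 × G4 × G4 × G4) :=
  {t | ∃ f g h e : E4 → ℂ, t = (↑f, ↑g, ↑h, ↑e) ∧
    ∃ V : Set E4, IsOpen V ∧ (0 : E4) ∈ V ∧
      DifferentiableOn ℂ f V ∧ DifferentiableOn ℂ g V ∧
      DifferentiableOn ℂ h V ∧ DifferentiableOn ℂ e V ∧
      TangentOn f g h e V}

/-!
The tangency condition is real-analytic in `p`, so it still holds when `p` and `p̄` are replaced by
independent points `p`, `q` of the polarization `p 3 - q 3 = 2 * I * polarQ p q` of `Q`. Moving `p`
and `q` separately to the `(ζ, w)`-plane and taking the mixed difference eliminates `e`, `f`, `g`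
and forces `h = h(ζ)`. With `q` on the `w`-axis the equation expresses `e` through the restrictions
of `e`, `f`, `g` to that axis, and substituting this back leaves an equation for functions of
fewer variables, in which equal values of `w` can be reached from different values of `ζ(q)`. Hence
`e`, `f` are affine and `g` is constant on the `w`-axis, and `h` is quadratic in `ζ`. After
subtracting the model tuple with these parameters, `h = e = 0`, and then `f` and `g` are quadratic
in `ζ` with a skew-Hermitian matrix of coefficients.
-/

section HolomorphicFunctions

variable {E F : Type*} [NormedAddCommGroup E] [NormedSpace ℂ E] [NormedAddCommGroup F]
  [NormedSpace ℂ F] [CompleteSpace F]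

theorem eqOn_zero_of_ofReal_eq_zero {f : ℂ → F} {U : Set ℂ}
    (hf : DifferentiableOn ℂ f U) (hU : IsOpen U) (hUc : IsPreconnected U) (h0 : 0 ∈ U)
    (hreal : ∀ᶠ t : ℝ in 𝓝 0, f t = 0) : Set.EqOn f 0 U := by
  have hofReal : Tendsto ((↑) : ℝ → ℂ) (𝓝[≠] 0) (𝓝[≠] 0) := by
    simpa using continuous_ofReal.continuousWithinAt.tendsto_nhdsWithin (s := {(0 : ℝ)}ᶜ) (x := 0)
      (t := {(0 : ℂ)}ᶜ) fun t ht => by simpa using ht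
  exact (hf.analyticOnNhd hU).eqOn_zero_of_preconnected_of_frequently_eq_zero hUc h0
    (hofReal.frequently (eventually_nhdsWithin_of_eventually_nhds hreal).frequently)

theorem eventually_eq_zero_of_eq_zero_star [StarAddMonoid E] [StarModule ℂ E] [ContinuousStar E]
    {Φ : E × E → F} (hΦ : ∀ᶠ x in 𝓝 0, DifferentiableAt ℂ Φ x)
    (hstar : ∀ᶠ z : E in 𝓝 0, Φ (z, star z) = 0) : ∀ᶠ x in 𝓝 0, Φ x = 0 := by
  let u (x : E × E) : E := (2⁻¹ : ℂ) • (x.1 + star x.2)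
  let v (x : E × E) : E := (2⁻¹ : ℂ) • (x.1 - star x.2)
  let γ (x : E × E) (t : ℂ) : E × E :=
    (u x - (I * t) • v x, star (u x) + (I * t) • star (v x))
  have hγ (t : ℂ) : Tendsto (fun y : (E × E) × ℂ => γ y.1 y.2) (𝓝 (0, t)) (𝓝 0) :=
    Continuous.tendsto' (by fun_prop) _ _ (by simp [γ, u, v])
  have hcomp : IsCompact (Metric.closedBall (0 : ℂ) 2) := isCompact_closedBall 0 2
  have hdiff : ∀ᶠ x in 𝓝 0, ∀ t ∈ Metric.closedBall (0 : ℂ) 2, DifferentiableAt ℂ Φ (γ x t) :=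
    hcomp.eventually_forall_of_forall_eventually fun t _ => (hγ t).eventually hΦ
  have hzero : ∀ᶠ x in 𝓝 0, ∀ t ∈ Metric.closedBall (0 : ℂ) 2,
      Φ ((γ x t).1, star (γ x t).1) = 0 :=
    hcomp.eventually_forall_of_forall_eventually fun t _ =>
      ((continuous_fst.tendsto' _ _ rfl).comp (hγ t)).eventually hstar
  filter_upwards [hdiff, hzero] with x hdiff hzero
  have hon : DifferentiableOn ℂ (fun t => Φ (γ x t)) (Metric.ball 0 2) := fun t ht =>
    ((hdiff t (Metric.ball_subset_closedBall ht)).comp t (by fun_prop)).differentiableWithinAt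
  have hreal : ∀ᶠ t : ℝ in 𝓝 0, Φ (γ x t) = 0 := by
    filter_upwards [Metric.ball_mem_nhds 0 two_pos] with t ht
    have hstarγ : star (γ x t).1 = (γ x t).2 := by simp [γ, star_sub, star_smul]
    rw [← hzero t (by simpa using (Metric.mem_ball.1 ht).le)]
    simp [hstarγ]
  have hI := eqOn_zero_of_ofReal_eq_zero hon Metric.isOpen_ball
    (convex_ball _ _).isPreconnected (by simp) hreal (show I ∈ Metric.ball 0 2 by simp)
  have hγI : γ x I = x := by
    ext <;> simp [γ, u, v, star_smul, star_sub, star_add] <;> module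
  simpa [hγI] using hI

theorem eqOn_of_preconnected_of_eventuallyEq {f k : E → F} {U : Set E} (hU : IsOpen U)
    (hUc : IsPreconnected U) (hf : DifferentiableOn ℂ f U) (hk : DifferentiableOn ℂ k U) {x₀ : E}
    (hx₀ : x₀ ∈ U) (h : f =ᶠ[𝓝 x₀] k) : Set.EqOn f k U := by
  let T : Set E := {x | f =ᶠ[𝓝 x] k}
  have hT : IsOpen T := isOpen_iff_mem_nhds.2 fun x hx => eventually_eventually_nhds.2 hx
  suffices hclosed : closure T ∩ U ⊆ T from fun x hx =>
    EventuallyEq.eq_of_nhds (hUc.subset_of_closure_inter_subset hT ⟨x₀, hx₀, h⟩ hclosed hx)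
  rintro y ⟨hyT, hyU⟩
  obtain ⟨R, hR, hball⟩ := Metric.isOpen_iff.1 hU y hyU
  obtain ⟨x, hxT, hxy⟩ := Metric.mem_closure_iff.1 hyT R hR
  refine Filter.mem_of_superset (Metric.ball_mem_nhds y hR) fun p hp => ?_
  let γ (t : ℂ) : E := x + t • (p - x)
  let D : Set ℂ := γ ⁻¹' Metric.ball y R
  have hγ : Differentiable ℂ γ := by fun_prop
  have hD : IsOpen D := Metric.isOpen_ball.preimage hγ.continuous
  have hDc : IsPreconnected D :=
    (((convex_ball y R).translate_preimage_right x).linear_preimage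
      ((LinearMap.toSpanSingleton ℂ E (p - x)).restrictScalars ℝ)).isPreconnected
  have hline {φ : E → F} (hφ : DifferentiableOn ℂ φ U) : AnalyticOnNhd ℂ (φ ∘ γ) D :=
    (hφ.comp hγ.differentiableOn fun t ht => hball ht).analyticOnNhd hD
  have hnear : f ∘ γ =ᶠ[𝓝 0] k ∘ γ :=
    (hγ.continuous.tendsto' 0 x (by simp [γ])).eventually hxT
  simpa [γ] using (hline hf).eqOn_of_preconnected_of_eventuallyEq (hline hk) hDc
    (by simpa [D, γ, dist_comm] using hxy) hnear (show (1 : ℂ) ∈ D by simpa [D, γ] using hp)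

end HolomorphicFunctions

section FunctionalEquation

theorem exists_ne_zero_eventually {α : Type*} [TopologicalSpace α] {a : α} {P : ℂ × α → Prop}
    (h : ∀ᶠ x in 𝓝 (0, a), P x) : ∃ y ≠ 0, ∀ᶠ x in 𝓝 a, P (y, x) :=
  have hne : ∀ᶠ y : ℂ in 𝓝[≠] 0, y ≠ 0 := self_mem_nhdsWithin
  (hne.and (eventually_nhdsWithin_of_eventually_nhds h.curry_nhds)).exists

theorem eventually_comp_mul {P : ℂ → Prop} {k : ℂ} (hk : k ≠ 0)
    (h : ∀ᶠ z in 𝓝 0, P (k * z)) : ∀ᶠ x in 𝓝 0, P x := by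
  have hdiv : Tendsto (fun x : ℂ => x / k) (𝓝 0) (𝓝 0) :=
    Continuous.tendsto' (by fun_prop) _ _ (by simp)
  filter_upwards [hdiv.eventually h] with x hx
  rwa [mul_div_cancel₀ _ hk] at hx

theorem exists_slope_of_comp_sq_mul {Φ r c : ℂ → ℂ} {k : ℂ} (hk : k ≠ 0)
    (hr : ∀ y ≠ 0, r y ≠ 0) (hc : c 0 = 0)
    (h : ∀ᶠ x : ℂ × ℂ in 𝓝 0, x.1 ≠ 0 → Φ (k * x.1 ^ 2 * x.2) * r x.1 = x.2 * c x.1) :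
    ∃ N, (∀ᶠ s in 𝓝 0, Φ s = N * s) ∧ ∀ᶠ y in 𝓝 0, c y = N * k * y ^ 2 * r y := by
  obtain ⟨N, hN⟩ : ∃ N, ∀ᶠ s in 𝓝 0, Φ s = N * s := by
    obtain ⟨y, hy, hΦy⟩ := exists_ne_zero_eventually h
    refine ⟨c y / r y / (k * y ^ 2), eventually_comp_mul (k := k * y ^ 2) (by simp [hk, hy]) ?_⟩
    filter_upwards [hΦy] with z hz
    have := hr y hy
    field_simp
    linear_combination hz hy
  refine ⟨N, hN, ?_⟩
  have hs : Tendsto (fun x : ℂ × ℂ => k * x.2 ^ 2 * x.1) (𝓝 0) (𝓝 0) :=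
    Continuous.tendsto' (by fun_prop) _ _ (by simp)
  have hswap : Tendsto Prod.swap (𝓝 (0 : ℂ × ℂ)) (𝓝 0) := continuous_swap.tendsto' _ _ rfl
  obtain ⟨z, hz, hcz⟩ := exists_ne_zero_eventually ((hswap.eventually h).and (hs.eventually hN))
  filter_upwards [hcz] with y ⟨hy, hNy⟩
  rcases eq_or_ne y 0 with rfl | hy0
  · simp [hc]
  · have hyz : Φ (k * y ^ 2 * z) * r y = z * c y := hy hy0
    refine mul_left_cancel₀ hz ?_
    linear_combination r y * hNy - hyz

/-- The trace of the polarized tangency equation on `p` with `ζ = w = 0`, where `E`, `F`, `G`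
are the restrictions of `e`, `f`, `g` to the `w`-axis, `U` and `V` those of `f` and `g` to the
`(z₁, z₂)`-plane, `K` that of `h̄` to the `ζ`-axis, and `J = 2 * I`. -/
def TraceEquation (J : ℂ) (E F G K : ℂ → ℂ) (U V : ℂ → ℂ → ℂ) : Prop :=
  ∀ᶠ x : ℂ × ℂ × ℂ in 𝓝 0, ∀ z₁ z₂ η s, x = (z₁, z₂, η) → s = -J * (z₁ * η + z₂ * η ^ 2) →
    E 0 + J * K 0 * z₁ - E s + J * (F s * η + G s * η ^ 2) =
      J * (U z₁ z₂ * η + V z₁ z₂ * η ^ 2 + K η * (z₁ + 2 * z₂ * η))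

variable {J : ℂ} {E F G K : ℂ → ℂ} {U V : ℂ → ℂ → ℂ}

-- The points `η = y₁, y₂` share the value `s` exactly when `z₁ = -z₂ * (y₁ + y₂)`.
theorem TraceEquation.divided_differences (h : TraceEquation J E F G K U V) (hJ : J ≠ 0) :
    ∀ᶠ x : ℂ × ℂ × ℂ in 𝓝 0, ∀ z y₁ y₂ s, x = (z, y₁, y₂) → y₁ ≠ y₂ → s = J * z * (y₁ * y₂) →
      F s - U (-z * (y₁ + y₂)) z + (G s - V (-z * (y₁ + y₂)) z) * (y₁ + y₂) = z * (K y₁ + K y₂) ∧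
      J * (G s - V (-z * (y₁ + y₂)) z) * (y₁ * y₂) =
        E 0 - E s - J * K 0 * z * (y₁ + y₂) + J * z * (y₂ * K y₁ + y₁ * K y₂) := by
  have h₁ : Tendsto (fun x : ℂ × ℂ × ℂ => (-x.1 * (x.2.1 + x.2.2), x.1, x.2.1)) (𝓝 0) (𝓝 0) :=
    Continuous.tendsto' (by fun_prop) _ _ (by simp)
  have h₂ : Tendsto (fun x : ℂ × ℂ × ℂ => (-x.1 * (x.2.1 + x.2.2), x.1, x.2.2)) (𝓝 0) (𝓝 0) :=
    Continuous.tendsto' (by fun_prop) _ _ (by simp)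
  filter_upwards [h₁.eventually h, h₂.eventually h]
  rintro _ eq₁ eq₂ z y₁ y₂ s rfl hne hs
  replace eq₁ := eq₁ _ _ _ s rfl (by linear_combination hs)
  replace eq₂ := eq₂ _ _ _ s rfl (by linear_combination hs)
  constructor
  · refine mul_left_cancel₀ (mul_ne_zero hJ (sub_ne_zero.2 hne)) ?_
    linear_combination eq₁ - eq₂
  · refine mul_left_cancel₀ (sub_ne_zero.2 hne) ?_
    linear_combination y₂ * eq₁ - y₁ * eq₂

theorem TraceEquation.compare_sum_zero (h : TraceEquation J E F G K U V) (hJ : J ≠ 0) :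
    ∀ᶠ x : ℂ × ℂ in 𝓝 0, ∀ y z s, x = (y, z) → s = 2 * J * y ^ 2 * z →
      F s - F 0 + (G s - G 0) * (3 * y) = z * (K y + K (2 * y) - K (3 * y) - K 0) := by
  have h₁ : Tendsto (fun x : ℂ × ℂ => (x.2, x.1, 2 * x.1)) (𝓝 0) (𝓝 0) :=
    Continuous.tendsto' (by fun_prop) _ _ (by simp)
  have h₂ : Tendsto (fun x : ℂ × ℂ => (x.2, 3 * x.1, (0 : ℂ))) (𝓝 0) (𝓝 0) :=
    Continuous.tendsto' (by fun_prop) _ _ (by simp)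
  filter_upwards [h₁.eventually (h.divided_differences hJ),
    h₂.eventually (h.divided_differences hJ)]
  rintro _ eq₁ eq₂ y z s rfl hs
  rcases eq_or_ne y 0 with rfl | hy
  · simp [hs]
  have hne : y ≠ 2 * y := by simpa [two_mul] using hy
  obtain ⟨eq₁, -⟩ := eq₁ _ _ _ s rfl hne (by linear_combination hs)
  obtain ⟨eq₂, -⟩ := eq₂ _ _ _ 0 rfl (by simpa using hy) (by simp)
  ring_nf at eq₁ eq₂ ⊢
  linear_combination eq₁ - eq₂

theorem TraceEquation.at_opposite (h : TraceEquation J E F G K U V) (hJ : J ≠ 0) :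
    ∀ᶠ x : ℂ × ℂ in 𝓝 0, ∀ y z s, x = (y, z) → y ≠ 0 → s = -J * y ^ 2 * z →
      F s = U 0 z + z * (K y + K (-y)) ∧
      E s - E 0 = J * (G s - V 0 z) * y ^ 2 + J * z * y * (K (-y) - K y) := by
  have ht : Tendsto (fun x : ℂ × ℂ => (x.2, x.1, -x.1)) (𝓝 0) (𝓝 0) :=
    Continuous.tendsto' (by fun_prop) _ _ (by simp)
  filter_upwards [ht.eventually (h.divided_differences hJ)]
  rintro _ eq y z s rfl hy hs
  have hne : y ≠ -y := fun h => hy (self_eq_neg.1 h)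
  obtain ⟨eq₁, eq₂⟩ := eq _ _ _ s rfl hne (by linear_combination hs)
  simp only [add_neg_cancel, mul_zero] at eq₁ eq₂
  constructor
  · linear_combination eq₁
  · linear_combination eq₂

theorem TraceEquation.exists_slope_F (h : TraceEquation J E F G K U V) (hJ : J ≠ 0)
    (hF : ContinuousAt F 0) (hK : ContinuousAt K 0) :
    ∃ N, (∀ᶠ s in 𝓝 0, F s - F 0 = N * s) ∧
      ∀ᶠ y in 𝓝 0, K y + K (-y) - 2 * K 0 = -N * J * y ^ 2 := by
  have hswap : Tendsto Prod.swap (𝓝 (0 : ℂ × ℂ)) (𝓝 0) := continuous_swap.tendsto' _ _ rfl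
  have hsnd : Tendsto Prod.snd (𝓝 (0 : ℂ × ℂ)) (𝓝 0) := continuous_snd.tendsto' _ _ rfl
  have hU : ∀ᶠ z in 𝓝 0, F 0 - z * (K 0 + K 0) = U 0 z := by
    filter_upwards [(hswap.eventually (h.at_opposite hJ)).curry_nhds] with z hz
    have hlim : Tendsto (fun y => F (-J * y ^ 2 * z) - z * (K y + K (-y))) (𝓝 0)
        (𝓝 (F 0 - z * (K 0 + K 0))) :=
      .sub (hF.tendsto.comp (Continuous.tendsto' (by fun_prop) _ _ (by simp)))
        (.const_mul _ (hK.tendsto.add (hK.tendsto.comp (continuous_neg.tendsto' _ _ neg_zero))))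
    refine tendsto_nhds_unique (hlim.mono_left (nhdsWithin_le_nhds (s := {0}ᶜ)))
      (tendsto_const_nhds.congr' ?_)
    filter_upwards [eventually_nhdsWithin_of_eventually_nhds hz, self_mem_nhdsWithin] with y hy hy0
    rw [(hy y z _ rfl hy0 rfl).1, add_sub_cancel_right]
  obtain ⟨N, hN, hKN⟩ := exists_slope_of_comp_sq_mul (Φ := fun s => F s - F 0) (r := 1)
    (c := fun y => K y + K (-y) - 2 * K 0) (neg_ne_zero.2 hJ) (by simp) (by simp [two_mul]) <| by
      filter_upwards [h.at_opposite hJ, hsnd.eventually hU] with x hx hU hx0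
      simp only [Pi.one_apply, (hx _ _ _ rfl hx0 rfl).1]
      linear_combination -hU
  exact ⟨N, hN, hKN.mono fun y hy => by simpa using hy⟩

theorem TraceEquation.exists_slope_G (h : TraceEquation J E F G K U V) (hJ : J ≠ 0) {N : ℂ}
    (hF : ∀ᶠ s in 𝓝 0, F s - F 0 = N * s) :
    ∃ B, (∀ᶠ s in 𝓝 0, G s - G 0 = B * s) ∧ ∀ᶠ y in 𝓝 0,
      K y + K (2 * y) - K (3 * y) - K 0 = 2 * N * J * y ^ 2 + 6 * B * J * y ^ 3 := by
  have hs : Tendsto (fun x : ℂ × ℂ => 2 * J * x.1 ^ 2 * x.2) (𝓝 0) (𝓝 0) :=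
    Continuous.tendsto' (by fun_prop) _ _ (by simp)
  obtain ⟨B, hB, hKB⟩ := exists_slope_of_comp_sq_mul (Φ := fun s => G s - G 0)
    (r := fun y => 3 * y) (c := fun y => K y + K (2 * y) - K (3 * y) - K 0 - 2 * N * J * y ^ 2)
    (mul_ne_zero two_ne_zero hJ) (by simp) (by simp) <| by
      filter_upwards [h.compare_sum_zero hJ, hs.eventually hF] with x hx hF _
      linear_combination hx _ _ (2 * J * x.1 ^ 2 * x.2) rfl rfl - hF
  exact ⟨B, hB, hKB.mono fun y hy => by linear_combination hy⟩

theorem eventually_eq_of_separated {S A p : ℂ → ℂ} {k : ℂ} (hk : k ≠ 0) (hS : ContinuousAt S 0)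
    (hp : ContinuousAt p 0)
    (h : ∀ᶠ x : ℂ × ℂ in 𝓝 0, x.1 ≠ 0 → x.2 ≠ 0 → S (k * x.1 ^ 2 * x.2) = A x.2 + p x.1) :
    (∀ᶠ s in 𝓝 0, S s = S 0) ∧ ∀ᶠ y in 𝓝 0, p y = p 0 := by
  have hswap : Tendsto Prod.swap (𝓝 (0 : ℂ × ℂ)) (𝓝 0) := continuous_swap.tendsto' _ _ rfl
  have hfst : Tendsto Prod.fst (𝓝 (0 : ℂ × ℂ)) (𝓝 0) := continuous_fst.tendsto' _ _ rfl
  have hsnd : Tendsto Prod.snd (𝓝 (0 : ℂ × ℂ)) (𝓝 0) := continuous_snd.tendsto' _ _ rfl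
  have hA : ∀ᶠ z in 𝓝 0, z ≠ 0 → S 0 - p 0 = A z := by
    filter_upwards [(hswap.eventually h).curry_nhds] with z hz hz0
    have hlim : Tendsto (fun y => S (k * y ^ 2 * z) - p y) (𝓝 0) (𝓝 (S 0 - p 0)) :=
      (hS.tendsto.comp (Continuous.tendsto' (by fun_prop) _ _ (by simp))).sub hp.tendsto
    refine tendsto_nhds_unique (hlim.mono_left (nhdsWithin_le_nhds (s := {0}ᶜ)))
      (tendsto_const_nhds.congr' ?_)
    filter_upwards [eventually_nhdsWithin_of_eventually_nhds hz, self_mem_nhdsWithin] with y hy hy0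
    rw [show S (k * y ^ 2 * z) = A z + p y from hy hy0 hz0, add_sub_cancel_right]
  have hSp : ∀ᶠ x : ℂ × ℂ in 𝓝 0, x.1 ≠ 0 → x.2 ≠ 0 →
      S (k * x.1 ^ 2 * x.2) = S 0 - p 0 + p x.1 := by
    filter_upwards [h, hsnd.eventually hA] with x hx hA hy hz
    rw [hx hy hz, hA hz]
  have hpy : ∀ᶠ y in 𝓝 0, p y = p 0 := by
    filter_upwards [hSp.curry_nhds] with y hy
    rcases eq_or_ne y 0 with rfl | hy0
    · rfl
    have hlim : Tendsto (fun z => S (k * y ^ 2 * z)) (𝓝 0) (𝓝 (S 0)) :=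
      hS.tendsto.comp (Continuous.tendsto' (by fun_prop) _ _ (by simp))
    suffices S 0 = S 0 - p 0 + p y by linear_combination -this
    refine tendsto_nhds_unique (hlim.mono_left (nhdsWithin_le_nhds (s := {0}ᶜ)))
      (tendsto_const_nhds.congr' ?_)
    filter_upwards [eventually_nhdsWithin_of_eventually_nhds hy, self_mem_nhdsWithin] with z hz hz0
    exact (hz hy0 hz0).symm
  refine ⟨?_, hpy⟩
  obtain ⟨y, hy, hSy⟩ := exists_ne_zero_eventually (hSp.and (hfst.eventually hpy))
  refine eventually_comp_mul (k := k * y ^ 2) (by simp [hk, hy]) ?_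
  filter_upwards [hSy] with z ⟨hz, hpy⟩
  rcases eq_or_ne z 0 with rfl | hz0
  · simp
  · rw [hz hy hz0, hpy, sub_add_cancel]

theorem TraceEquation.exists_affine_E (h : TraceEquation J E F G K U V) (hJ : J ≠ 0)
    (hE : DifferentiableAt ℂ E 0) (hK : DifferentiableAt ℂ K 0) {N B : ℂ}
    (hKN : ∀ᶠ y in 𝓝 0, K y + K (-y) - 2 * K 0 = -N * J * y ^ 2)
    (hG : ∀ᶠ s in 𝓝 0, G s - G 0 = B * s) :
    ∃ lam L, (∀ᶠ s in 𝓝 0, E s = E 0 + lam * s) ∧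
      ∀ᶠ y in 𝓝 0, K y = K 0 + L * y - J * N / 2 * y ^ 2 - J * B / 2 * y ^ 3 := by
  have hfst : Tendsto Prod.fst (𝓝 (0 : ℂ × ℂ)) (𝓝 0) := continuous_fst.tendsto' _ _ rfl
  have hs : Tendsto (fun x : ℂ × ℂ => -J * x.1 ^ 2 * x.2) (𝓝 0) (𝓝 0) :=
    Continuous.tendsto' (by fun_prop) _ _ (by simp)
  obtain ⟨hE', hK'⟩ := eventually_eq_of_separated (S := dslope E 0) (k := -J)
    (A := fun z => (V 0 z - G 0) / z) (p := fun y => J * B * y ^ 2 + J * N * y + 2 * dslope K 0 y)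
    (neg_ne_zero.2 hJ) (continuousAt_dslope_same.2 hE)
    (by have := continuousAt_dslope_same.2 hK; fun_prop) <| by
      filter_upwards [h.at_opposite hJ, hfst.eventually hKN, hs.eventually hG] with x hx hK hG hy hz
      have hs : -J * x.1 ^ 2 * x.2 ≠ 0 := by simp [hJ, hy, hz]
      have hE := (hx _ _ _ rfl hy rfl).2
      rw [dslope_of_ne _ hs, dslope_of_ne _ hy, slope_def_field, slope_def_field, sub_zero,
        sub_zero, div_eq_iff hs, hE, sub_eq_iff_eq_add.1 hG]
      field_simp
      linear_combination x.2 * hK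
  refine ⟨dslope E 0 0, dslope K 0 0, ?_, ?_⟩
  · filter_upwards [hE'] with s hs
    have := sub_smul_dslope E 0 s
    rw [hs] at this
    simp only [smul_eq_mul] at this
    linear_combination -this
  · filter_upwards [hK'] with y hy
    have := sub_smul_dslope K 0 y
    simp only [smul_eq_mul] at this
    linear_combination y / 2 * hy - this

theorem TraceEquation.exists_solution (h : TraceEquation J E F G K U V) (hJ : J ≠ 0)
    (hE : DifferentiableAt ℂ E 0) (hF : ContinuousAt F 0) (hK : DifferentiableAt ℂ K 0) :
    ∃ N L lam, (∀ᶠ s in 𝓝 0, F s = F 0 + N * s) ∧ (∀ᶠ s in 𝓝 0, G s = G 0) ∧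
      (∀ᶠ s in 𝓝 0, E s = E 0 + lam * s) ∧
      ∀ᶠ y in 𝓝 0, K y = K 0 + L * y - J * N / 2 * y ^ 2 := by
  obtain ⟨N, hFN, hKN⟩ := h.exists_slope_F hJ hF hK.continuousAt
  obtain ⟨B, hGB, hKB⟩ := h.exists_slope_G hJ hFN
  obtain ⟨lam, L, hElam, hKL⟩ := h.exists_affine_E hJ hE hK hKN hGB
  have hB : B = 0 := by
    have hmul (c : ℂ) : Tendsto (fun y => c * y) (𝓝 0) (𝓝 0) :=
      Continuous.tendsto' (by fun_prop) _ _ (by simp)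
    have hy : ∀ᶠ y : ℂ in 𝓝[≠] 0, y ≠ 0 := self_mem_nhdsWithin
    obtain ⟨y, ⟨h₀, h₁, h₂, h₃⟩, hy⟩ := ((eventually_nhdsWithin_of_eventually_nhds
      (hKB.and (hKL.and (((hmul 2).eventually hKL).and ((hmul 3).eventually hKL))))).and hy).exists
    refine (mul_eq_zero_iff_right (mul_ne_zero hJ (pow_ne_zero 3 hy))).1 ?_
    linear_combination (h₀ + h₃ - h₁ - h₂) / 3
  subst hB
  refine ⟨N, L, lam, ?_, ?_, hElam, ?_⟩
  · filter_upwards [hFN] with s hs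
    rw [← hs, add_sub_cancel]
  · filter_upwards [hGB] with s hs
    linear_combination hs
  · filter_upwards [hKL] with y hy
    linear_combination hy

theorem conj_eq_of_affine {E : ℂ → ℂ} {a b : ℂ} (hE : ∀ᶠ s in 𝓝 0, E s = a + b * s)
    (hconj : ∀ᶠ s in 𝓝 0, E s = conj (E (conj s))) : conj a = a ∧ conj b = b := by
  have hab : ∀ᶠ s : ℂ in 𝓝 0, a + b * s = conj a + conj b * s := by
    filter_upwards [hE, (continuous_conj.tendsto' 0 0 (map_zero _)).eventually hE, hconj]
      with s h₁ h₂ h₃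
    rw [← h₁, h₃, h₂]
    simp
  have ha : a = conj a := by simpa using hab.self_of_nhds
  obtain ⟨s, hs, hs0⟩ := ((hab.filter_mono nhdsWithin_le_nhds).and
    (eventually_mem_nhdsWithin (s := {0}ᶜ))).exists
  exact ⟨ha.symm, (mul_right_cancel₀ hs0 (by linear_combination hs - ha)).symm⟩

theorem exists_quadratic_of_separated {A B u v : ℂ → ℂ}
    (h : ∀ᶠ x : ℂ × ℂ in 𝓝 0,
      A x.2 * x.1 + B x.2 * x.1 ^ 2 = u x.1 * x.2 + v x.1 * x.2 ^ 2) :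
    ∃ a b c d, (∀ᶠ y in 𝓝 0, A y = a * y + b * y ^ 2) ∧
      ∀ᶠ y in 𝓝 0, B y = c * y + d * y ^ 2 := by
  have hneg : Tendsto (fun x : ℂ × ℂ => (-x.1, x.2)) (𝓝 0) (𝓝 0) :=
    Continuous.tendsto' (by fun_prop) _ _ (by simp)
  obtain ⟨η, hη, hy⟩ := exists_ne_zero_eventually (h.and (hneg.eventually h))
  refine ⟨(u η - u (-η)) / (2 * η), (v η - v (-η)) / (2 * η), (u η + u (-η)) / (2 * η ^ 2),
    (v η + v (-η)) / (2 * η ^ 2), ?_, ?_⟩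
  · filter_upwards [hy] with y ⟨h₁, h₂⟩
    field_simp
    linear_combination h₁ - h₂
  · filter_upwards [hy] with y ⟨h₁, h₂⟩
    field_simp
    linear_combination h₁ + h₂

theorem biquadratic_coeffs_eq_zero {a b c d : ℂ} (h : ∀ᶠ x : ℂ × ℂ in 𝓝 0,
      a * (x.1 * x.2) + b * (x.1 ^ 2 * x.2) + c * (x.1 * x.2 ^ 2) + d * (x.1 * x.2) ^ 2 = 0) :
    a = 0 ∧ b = 0 ∧ c = 0 ∧ d = 0 := by
  have at_multiples (j k : ℂ) : ∀ᶠ t : ℂ in 𝓝[≠] 0,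
      a * (j * k) + b * (j ^ 2 * k) * t + c * (j * k ^ 2) * t + d * (j * k) ^ 2 * t ^ 2 = 0 := by
    have hjk : Tendsto (fun t : ℂ => (j * t, k * t)) (𝓝 0) (𝓝 0) :=
      Continuous.tendsto' (by fun_prop) _ _ (by simp)
    filter_upwards [(hjk.eventually h).filter_mono nhdsWithin_le_nhds, eventually_mem_nhdsWithin]
      with t ht ht0
    exact mul_left_cancel₀ (pow_ne_zero 2 ht0) (by linear_combination ht)
  obtain ⟨t, ⟨⟨⟨h₁, h₂⟩, h₃⟩, h₄⟩, ht⟩ := ((((at_multiples 1 1).and (at_multiples 1 (-1))).and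
    (at_multiples (-1) 1)).and (at_multiples (-1) (-1)) |>.and eventually_mem_nhdsWithin).exists
  refine ⟨by linear_combination (h₁ - h₂ - h₃ + h₄) / 4,
    mul_right_cancel₀ ht ?_, mul_right_cancel₀ ht ?_, mul_right_cancel₀ (pow_ne_zero 2 ht) ?_⟩
  · linear_combination (h₁ - h₂ + h₃ - h₄) / 4
  · linear_combination (h₁ + h₂ - h₃ - h₄) / 4
  · linear_combination (h₁ + h₂ + h₃ + h₄) / 4

end FunctionalEquation

/-- The polarization of the quadric part of `Q`: with `conj p` replaced by an independent variable
`q`, the equation of `Q` reads `p 3 - q 3 = 2 * I * polarQ p q`. -/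
def polarQ (p q : E4) : ℂ :=
  p 0 * q 2 + q 0 * p 2 + p 1 * q 2 ^ 2 + q 1 * p 2 ^ 2

/-- The conjugate `f̄` of `f`, given by `f̄ (conj p) = conj (f p)`; it is holomorphic when
`f` is. -/
def conjFun (f : E4 → ℂ) (q : E4) : ℂ :=
  conj (f (star q))

/-- `(f, g, h, e)` represents a germ at `0` of a holomorphic 4-tuple tangent to `Q`. -/
structure IsTangentGerm (f g h e : E4 → ℂ) : Prop where
  diff_f : ∀ᶠ p in 𝓝 0, DifferentiableAt ℂ f p
  diff_g : ∀ᶠ p in 𝓝 0, DifferentiableAt ℂ g p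
  diff_h : ∀ᶠ p in 𝓝 0, DifferentiableAt ℂ h p
  diff_e : ∀ᶠ p in 𝓝 0, DifferentiableAt ℂ e p
  tangent : ∃ V ∈ 𝓝 0, TangentOn f g h e V

theorem im_eq_two_mul_re_iff {x y : ℂ} : x.im = 2 * y.re ↔ x - conj x = 2 * I * (y + conj y) := by
  rw [Complex.sub_conj, Complex.add_conj, mul_comm _ I, mul_comm 2 I, mul_assoc I,
    mul_right_inj' I_ne_zero]
  norm_cast
  constructor <;> intro h <;> linarith

theorem mem_Q_iff {p : E4} : p ∈ Q ↔ p 3 - conj (p 3) = 2 * I * polarQ p (star p) := by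
  have hre : p ∈ Q ↔ (p 3).im = 2 * (p 0 * conj (p 2) + p 1 * conj (p 2) ^ 2).re := by
    rw [add_re, mul_add]; rfl
  rw [hre, im_eq_two_mul_re_iff]
  simp only [polarQ, Pi.star_apply, RCLike.star_def, map_add, map_mul, map_pow, conj_conj]
  ring_nf

theorem tangentOn_iff {f g h e : E4 → ℂ} {U : Set E4} :
    TangentOn f g h e U ↔ ∀ p ∈ Q ∩ U, e p - conj (e p) =
      2 * I * (f p * conj (p 2) + g p * conj (p 2) ^ 2 + h p * (conj (p 0) + 2 * conj (p 1) * p 2)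
        + (conj (f p) * p 2 + conj (g p) * p 2 ^ 2
          + conj (h p) * (p 0 + 2 * p 1 * conj (p 2)))) := by
  refine forall₂_congr fun p _ => im_eq_two_mul_re_iff.trans ?_
  simp only [map_add, map_mul, map_pow, conj_conj, Complex.conj_ofNat]

theorem conjFun_star (f : E4 → ℂ) (p : E4) : conjFun f (star p) = conj (f p) := by
  simp [conjFun]

theorem conjFun_vec (f : E4 → ℂ) (a b c d : ℂ) :
    conjFun f ![a, b, c, d] = conj (f ![conj a, conj b, conj c, conj d]) := by
  unfold conjFun
  congr 2
  ext i
  fin_cases i <;> simp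

theorem eventually_differentiableAt_conjFun {f : E4 → ℂ}
    (hf : ∀ᶠ p in 𝓝 0, DifferentiableAt ℂ f p) :
    ∀ᶠ p in 𝓝 0, DifferentiableAt ℂ (conjFun f) p := by
  filter_upwards [(continuous_star.tendsto' (0 : E4) 0 (star_zero _)).eventually hf] with p hp
  have := hp.star_star
  rwa [star_star] at this

/-- The projection of `ℂ⁴ × ℂ⁴` onto the polarized hypersurface along the diagonal direction of the
last coordinates. -/
noncomputable def projPolar (x : E4 × E4) : E4 × E4 :=
  (![x.1 0, x.1 1, x.1 2, (x.1 3 + x.2 3) / 2 + I * polarQ x.1 x.2],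
   ![x.2 0, x.2 1, x.2 2, (x.1 3 + x.2 3) / 2 - I * polarQ x.1 x.2])

theorem differentiable_projPolar : Differentiable ℂ projPolar := by
  unfold projPolar polarQ
  refine .prodMk ?_ ?_ <;> rw [differentiable_pi] <;> intro i <;> fin_cases i <;>
    simp only [Fin.zero_eta, Fin.mk_one, Fin.reduceFinMk, Matrix.cons_val] <;> fun_prop

theorem projPolar_of_eq {x : E4 × E4} (hx : x.1 3 - x.2 3 = 2 * I * polarQ x.1 x.2) :
    projPolar x = x := by
  ext i <;> fin_cases i <;>
    simp only [projPolar, Fin.zero_eta, Fin.mk_one, Fin.reduceFinMk, Matrix.cons_val]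
  · linear_combination -hx / 2
  · linear_combination hx / 2

theorem projPolar_star_snd (p : E4) :
    (projPolar (p, star p)).2 = star (projPolar (p, star p)).1 := by
  ext i
  fin_cases i <;> simp [projPolar, polarQ]
  ring

theorem projPolar_star_fst_mem_Q (p : E4) : (projPolar (p, star p)).1 ∈ Q := by
  have hconj : conj ((projPolar (p, star p)).1 3) = (projPolar (p, star p)).2 3 :=
    (congrFun (projPolar_star_snd p) 3).symm
  rw [mem_Q_iff, hconj, ← projPolar_star_snd]
  simp only [projPolar, polarQ, Matrix.cons_val]
  ring

/-- The defect at `(p, q)` of the polarized tangency equation, in which `conj p` is replaced by an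
independent variable `q`. -/
def tangencyDefect (f g h e : E4 → ℂ) (x : E4 × E4) : ℂ :=
  e x.1 - conjFun e x.2 - 2 * I * (f x.1 * x.2 2 + g x.1 * x.2 2 ^ 2
    + h x.1 * (x.2 0 + 2 * x.2 1 * x.1 2)
    + (conjFun f x.2 * x.1 2 + conjFun g x.2 * x.1 2 ^ 2
      + conjFun h x.2 * (x.1 0 + 2 * x.1 1 * x.2 2)))

namespace IsTangentGerm

variable {f g h e : E4 → ℂ}

theorem eventually_differentiableAt_tangencyDefect (ht : IsTangentGerm f g h e) :
    ∀ᶠ x in 𝓝 0, DifferentiableAt ℂ (tangencyDefect f g h e) x := by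
  have hfst : Tendsto Prod.fst (𝓝 (0 : E4 × E4)) (𝓝 0) := continuous_fst.tendsto' _ _ rfl
  have hsnd : Tendsto Prod.snd (𝓝 (0 : E4 × E4)) (𝓝 0) := continuous_snd.tendsto' _ _ rfl
  filter_upwards [hfst.eventually ht.diff_f, hfst.eventually ht.diff_g,
    hfst.eventually ht.diff_h, hfst.eventually ht.diff_e,
    hsnd.eventually (eventually_differentiableAt_conjFun ht.diff_f),
    hsnd.eventually (eventually_differentiableAt_conjFun ht.diff_g),
    hsnd.eventually (eventually_differentiableAt_conjFun ht.diff_h),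
    hsnd.eventually (eventually_differentiableAt_conjFun ht.diff_e)]
    with x hf hg hh he hf' hg' hh' he'
  unfold tangencyDefect
  fun_prop

theorem tangencyDefect_eq_zero (ht : IsTangentGerm f g h e) :
    ∀ᶠ x : E4 × E4 in 𝓝 0, x.1 3 - x.2 3 = 2 * I * polarQ x.1 x.2 →
      tangencyDefect f g h e x = 0 := by
  obtain ⟨V, hV, htan⟩ := ht.tangent
  have hproj : Tendsto projPolar (𝓝 0) (𝓝 0) :=
    differentiable_projPolar.continuous.tendsto' _ _ (projPolar_of_eq (by simp [polarQ]))
  have hdiag : Tendsto (fun p : E4 => (projPolar (p, star p)).1) (𝓝 0) (𝓝 0) :=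
    (continuous_fst.tendsto' (0 : E4 × E4) (0 : E4) rfl).comp
      (hproj.comp (Continuous.tendsto' (by fun_prop) _ _ (by simp)))
  have hstar : ∀ᶠ p : E4 in 𝓝 0, tangencyDefect f g h e (projPolar (p, star p)) = 0 := by
    filter_upwards [hdiag hV] with p hpV
    have := tangentOn_iff.1 htan _ ⟨projPolar_star_fst_mem_Q p, hpV⟩
    simp only [tangencyDefect, projPolar_star_snd, conjFun_star, this, Pi.star_apply,
      RCLike.star_def, sub_self]
  filter_upwards [eventually_eq_zero_of_eq_zero_star
    ((hproj.eventually ht.eventually_differentiableAt_tangencyDefect).mono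
      fun x hx => hx.comp x (differentiable_projPolar x)) hstar] with x hx hxQ
  rwa [Function.comp_apply, projPolar_of_eq hxQ] at hx

theorem eventually_eq_of_tendsto (ht : IsTangentGerm f g h e) {α : Type*} {l : Filter α}
    {p q : α → E4} (hp : Tendsto p l (𝓝 0)) (hq : Tendsto q l (𝓝 0)) :
    ∀ᶠ x in l, p x 3 - q x 3 = 2 * I * polarQ (p x) (q x) →
      e (p x) - conjFun e (q x) = 2 * I * (f (p x) * q x 2 + g (p x) * q x 2 ^ 2
        + h (p x) * (q x 0 + 2 * q x 1 * p x 2)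
        + (conjFun f (q x) * p x 2 + conjFun g (q x) * p x 2 ^ 2
          + conjFun h (q x) * (p x 0 + 2 * p x 1 * q x 2))) :=
  ((hp.prodMk_nhds hq).eventually ht.tangencyDefect_eq_zero).mono fun _ hx hQ =>
    sub_eq_zero.1 (hx hQ)

theorem h_mixed_difference (ht : IsTangentGerm f g h e) :
    ∀ᶠ x : ℂ × ℂ × E4 in 𝓝 0, ∀ χ η p s, x = (χ, η, p) →
      s = p 3 - 2 * I * (p 0 * η + p 1 * η ^ 2) →
      (h p - h ![0, 0, p 2, s]) * χ + (conjFun h ![χ, 0, η, s - 2 * I * (χ * p 2)]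
        - conjFun h ![0, 0, η, s]) * (p 0 + 2 * p 1 * η) = 0 := by
  let s (x : ℂ × ℂ × E4) : ℂ := x.2.2 3 - 2 * I * (x.2.2 0 * x.2.1 + x.2.2 1 * x.2.1 ^ 2)
  have hp : Tendsto (fun x : ℂ × ℂ × E4 => x.2.2) (𝓝 0) (𝓝 0) :=
    Continuous.tendsto' (by fun_prop) _ _ rfl
  have hp₀ : Tendsto (fun x : ℂ × ℂ × E4 => ![0, 0, x.2.2 2, s x]) (𝓝 0) (𝓝 0) :=
    Continuous.tendsto' (by fun_prop) _ _ (by simp [s])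
  have hq : Tendsto (fun x : ℂ × ℂ × E4 =>
      ![x.1, 0, x.2.1, s x - 2 * I * (x.1 * x.2.2 2)]) (𝓝 0) (𝓝 0) :=
    Continuous.tendsto' (by fun_prop) _ _ (by simp [s])
  have hq₀ : Tendsto (fun x : ℂ × ℂ × E4 => ![0, 0, x.2.1, s x]) (𝓝 0) (𝓝 0) :=
    Continuous.tendsto' (by fun_prop) _ _ (by simp [s])
  filter_upwards [ht.eventually_eq_of_tendsto hp hq, ht.eventually_eq_of_tendsto hp hq₀,
    ht.eventually_eq_of_tendsto hp₀ hq, ht.eventually_eq_of_tendsto hp₀ hq₀]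
  rintro _ h₁ h₂ h₃ h₄ χ η p s rfl rfl
  simp only [polarQ, Matrix.cons_val, s] at h₁ h₂ h₃ h₄
  refine mul_left_cancel₀ (mul_ne_zero two_ne_zero I_ne_zero) ?_
  linear_combination h₂ (by ring) + h₃ (by ring) - h₁ (by ring) - h₄ (by ring)

theorem exists_affine_h (ht : IsTangentGerm f g h e) :
    ∃ B : ℂ → ℂ → ℂ, ∀ᶠ p in 𝓝 0, h p = h ![0, 0, p 2, p 3] + B (p 2) (p 3) * p 0 := by
  have hη : Tendsto (fun x : ℂ × E4 => (x.1, (0 : ℂ), x.2)) (𝓝 0) (𝓝 0) :=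
    Continuous.tendsto' (by fun_prop) _ _ rfl
  obtain ⟨χ, hχ, hp⟩ := exists_ne_zero_eventually (hη.eventually ht.h_mixed_difference)
  refine ⟨fun ζ w => -(conjFun h ![χ, 0, 0, w - 2 * I * (χ * ζ)] - conjFun h ![0, 0, 0, w]) / χ, ?_⟩
  filter_upwards [hp] with p hp
  rw [div_mul_eq_mul_div, ← sub_eq_iff_eq_add', eq_div_iff hχ]
  linear_combination hp _ _ _ (p 3) rfl (by ring)

theorem h_translate (ht : IsTangentGerm f g h e) :
    ∀ᶠ x : ℂ × ℂ × E4 in 𝓝 0, ∀ η y p, x = (η, y, p) →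
      h ![-2 * y * η, y, p 2, p 3] = h ![0, 0, p 2, p 3 + 2 * I * y * η ^ 2] := by
  have hp : Tendsto (fun x : ℂ × ℂ × ℂ × E4 =>
      (x.1, x.2.1, ![-2 * x.2.2.1 * x.2.1, x.2.2.1, x.2.2.2 2, x.2.2.2 3])) (𝓝 0) (𝓝 0) :=
    Continuous.tendsto' (by fun_prop) _ _ (by simp)
  obtain ⟨χ, hχ, hx⟩ := exists_ne_zero_eventually (hp.eventually ht.h_mixed_difference)
  filter_upwards [hx]
  rintro _ hx η y p rfl
  have := hx _ _ _ (p 3 + 2 * I * y * η ^ 2) rfl (by simp only [Matrix.cons_val]; ring)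
  simp only [Matrix.cons_val] at this
  refine mul_left_cancel₀ hχ ?_
  linear_combination this

theorem h_eq_zeta (ht : IsTangentGerm f g h e) : ∀ᶠ p in 𝓝 0, h p = h ![0, 0, p 2, 0] := by
  obtain ⟨B, hB⟩ := ht.exists_affine_h
  have hp : Tendsto (fun x : ℂ × ℂ × E4 => ![-2 * x.2.1 * x.1, x.2.1, x.2.2 2, x.2.2 3])
      (𝓝 0) (𝓝 0) := Continuous.tendsto' (by fun_prop) _ _ (by simp)
  have hneg : Tendsto (fun x : ℂ × ℂ × E4 => (-x.1, x.2)) (𝓝 0) (𝓝 0) :=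
    Continuous.tendsto' (by fun_prop) _ _ (by simp)
  have hsum : ∀ᶠ x : ℂ × ℂ × E4 in 𝓝 0, ∀ η y p, x = (η, y, p) →
      h ![0, 0, p 2, p 3] - 2 * y * η * B (p 2) (p 3) =
        h ![0, 0, p 2, p 3 + 2 * I * y * η ^ 2] := by
    filter_upwards [ht.h_translate, hp.eventually hB]
    rintro _ h₁ h₂ η y p rfl
    simp only [Matrix.cons_val] at h₂
    linear_combination h₁ _ _ _ rfl - h₂
  obtain ⟨η, hη, hx⟩ := exists_ne_zero_eventually (hsum.and (hneg.eventually hsum))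
  have hB₀ : ∀ᶠ p : E4 in 𝓝 0, B (p 2) (p 3) = 0 := by
    obtain ⟨y, hy, hp⟩ := exists_ne_zero_eventually hx
    filter_upwards [hp] with p ⟨h₁, h₂⟩
    have h₁ := h₁ η y p rfl
    have h₂ := h₂ (-η) y p rfl
    rw [neg_sq] at h₂
    have : 2 * y * η * B (p 2) (p 3) = 0 := by linear_combination (h₂ - h₁) / 2
    simpa [hy, hη] using this
  have hy : Tendsto (fun p : E4 => (-p 3 / (2 * I * η ^ 2), p)) (𝓝 0) (𝓝 0) :=
    Continuous.tendsto' (by fun_prop) _ _ (by simp)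
  filter_upwards [hB, hB₀, hy.eventually hx] with p h₁ h₂ h₃
  have h₃ := h₃.1 _ _ _ rfl
  rw [show p 3 + 2 * I * (-p 3 / (2 * I * η ^ 2)) * η ^ 2 = 0 by field_simp; ring, h₂] at h₃
  rw [h₁, h₂, ← h₃]
  ring

theorem conjFun_h_eq_zeta (ht : IsTangentGerm f g h e) :
    ∀ᶠ q in 𝓝 0, conjFun h q = conjFun h ![0, 0, q 2, 0] := by
  filter_upwards [(continuous_star.tendsto' (0 : E4) 0 (star_zero _)).eventually ht.h_eq_zeta]
    with q hq
  rw [conjFun_vec]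
  simpa [conjFun] using congrArg conj hq

theorem e_eq_w_axis (ht : IsTangentGerm f g h e) :
    ∀ᶠ p in 𝓝 0, e p = e ![0, 0, 0, p 3] + 2 * I * (conjFun f ![0, 0, 0, p 3] * p 2
      + conjFun g ![0, 0, 0, p 3] * p 2 ^ 2 + conjFun h ![0, 0, 0, 0] * p 0) := by
  have hw : Tendsto (fun p : E4 => ![0, 0, 0, p 3]) (𝓝 0) (𝓝 0) :=
    Continuous.tendsto' (by fun_prop) _ _ (by simp)
  filter_upwards [ht.eventually_eq_of_tendsto tendsto_id hw, ht.eventually_eq_of_tendsto hw hw,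
    hw.eventually ht.conjFun_h_eq_zeta] with p h₁ h₂ h₃
  simp only [polarQ, Matrix.cons_val, id, h₃] at h₁ h₂
  linear_combination h₁ (by ring) - h₂ (by ring)

theorem e_w_axis_eq_conj (ht : IsTangentGerm f g h e) :
    ∀ᶠ s in 𝓝 0, e ![0, 0, 0, s] = conj (e ![0, 0, 0, conj s]) := by
  have hs : Tendsto (fun s : ℂ => ![0, 0, 0, s]) (𝓝 0) (𝓝 0) :=
    Continuous.tendsto' (by fun_prop) _ _ (by simp)
  filter_upwards [ht.eventually_eq_of_tendsto hs hs] with s h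
  simp only [polarQ, Matrix.cons_val, conjFun_vec, map_zero] at h
  linear_combination h (by ring)

theorem traceEquation (ht : IsTangentGerm f g h e) :
    TraceEquation (2 * I) (fun s => e ![0, 0, 0, s]) (fun s => f ![0, 0, 0, s])
      (fun s => g ![0, 0, 0, s]) (fun η => conjFun h ![0, 0, η, 0])
      (fun z₁ z₂ => f ![z₁, z₂, 0, 0]) (fun z₁ z₂ => g ![z₁, z₂, 0, 0]) := by
  let s (x : ℂ × ℂ × ℂ) : ℂ := -(2 * I) * (x.1 * x.2.2 + x.2.1 * x.2.2 ^ 2)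
  have hp : Tendsto (fun x : ℂ × ℂ × ℂ => ![x.1, x.2.1, 0, 0]) (𝓝 0) (𝓝 0) :=
    Continuous.tendsto' (by fun_prop) _ _ (by simp)
  have hs : Tendsto (fun x : ℂ × ℂ × ℂ => ![0, 0, 0, s x]) (𝓝 0) (𝓝 0) :=
    Continuous.tendsto' (by fun_prop) _ _ (by simp [s])
  have hq : Tendsto (fun x : ℂ × ℂ × ℂ => ![0, 0, x.2.2, s x]) (𝓝 0) (𝓝 0) :=
    Continuous.tendsto' (by fun_prop) _ _ (by simp [s])
  filter_upwards [ht.eventually_eq_of_tendsto hp hq, ht.eventually_eq_of_tendsto hs hq,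
    hp.eventually ht.e_eq_w_axis, hq.eventually ht.conjFun_h_eq_zeta]
  rintro _ h₁ h₂ h₃ h₄ z₁ z₂ η _ rfl rfl
  simp only [polarQ, Matrix.cons_val, s] at h₁ h₂ h₃ h₄
  rw [h₄] at h₁
  linear_combination h₁ (by ring) - h₂ (by ring) - h₃

theorem exists_axis_solution (ht : IsTangentGerm f g h e) :
    ∃ (N L : ℂ) (r : ℝ), (∀ᶠ s in 𝓝 0, f ![0, 0, 0, s] = f 0 + N * s) ∧
      (∀ᶠ s in 𝓝 0, g ![0, 0, 0, s] = g 0) ∧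
      (∀ᶠ s in 𝓝 0, e ![0, 0, 0, s] = (e 0).re + r * s) ∧
      ∀ᶠ y in 𝓝 0, h ![0, 0, y, 0] = h 0 + L * y + I * conj N * y ^ 2 := by
  have h0 : (![0, 0, 0, 0] : E4) = 0 := by simp
  have hwaxis : DifferentiableAt ℂ (fun s : ℂ => ![0, 0, 0, s]) 0 :=
    differentiableAt_pi.2 fun i => by fin_cases i <;> simp
  have hζaxis : DifferentiableAt ℂ (fun y : ℂ => ![0, 0, y, 0]) 0 :=
    differentiableAt_pi.2 fun i => by fin_cases i <;> simp
  obtain ⟨N, L, lam, hF, hG, hE, hK⟩ := ht.traceEquation.exists_solution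
    (mul_ne_zero two_ne_zero I_ne_zero)
    (.fun_comp' (0 : ℂ) (h0 ▸ ht.diff_e.self_of_nhds) hwaxis)
    (ht.diff_f.self_of_nhds.continuousAt.comp_of_eq hwaxis.continuousAt h0)
    (.fun_comp' (0 : ℂ) (h0 ▸ (eventually_differentiableAt_conjFun ht.diff_h).self_of_nhds) hζaxis)
  obtain ⟨he0, hlam⟩ := conj_eq_of_affine hE ht.e_w_axis_eq_conj
  refine ⟨N, conj L, lam.re, by simpa only [h0] using hF, by simpa only [h0] using hG, ?_, ?_⟩
  · filter_upwards [hE] with s hs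
    rw [hs, conj_eq_iff_re.1 hlam, ← h0, conj_eq_iff_re.1 he0]
  · filter_upwards [(continuous_conj.tendsto' 0 0 (map_zero _)).eventually hK] with y hy
    have := congrArg conj hy
    simp only [conjFun_vec, map_zero, conj_conj, map_sub, map_add, map_mul, map_div₀, map_pow,
      conj_I, Complex.conj_ofNat] at this
    linear_combination this + congrArg h h0

theorem exists_params_h_e (ht : IsTangentGerm f g h e) :
    ∃ P : Params, h =ᶠ[𝓝 0] mH P ∧ e =ᶠ[𝓝 0] mE P := by
  obtain ⟨N, L, r, hF, hG, hE, hH⟩ := ht.exists_axis_solution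
  have hw : Tendsto (fun p : E4 => p 3) (𝓝 0) (𝓝 0) := Continuous.tendsto' (by fun_prop) _ _ rfl
  have hw' : Tendsto (fun p : E4 => conj (p 3)) (𝓝 0) (𝓝 0) :=
    Continuous.tendsto' (by fun_prop) _ _ (by simp)
  have hζ : Tendsto (fun p : E4 => p 2) (𝓝 0) (𝓝 0) := Continuous.tendsto' (by fun_prop) _ _ rfl
  have h0 : (![0, 0, 0, 0] : E4) = 0 := by simp
  refine ⟨⟨(e 0).re, 0, r / 3, 0, f 0, g 0, h 0, 0, r - conj L, N⟩, ?_, ?_⟩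
  · filter_upwards [ht.h_eq_zeta, hζ.eventually hH] with p h₁ h₂
    rw [h₁, h₂]
    simp only [mH, ofReal_div, ofReal_ofNat, map_sub, conj_ofReal, conj_conj]
    ring
  · filter_upwards [ht.e_eq_w_axis, hw.eventually hE, hw'.eventually hF, hw'.eventually hG]
      with p h₁ h₂ h₃ h₄
    simp only [conjFun_vec, map_zero] at h₁
    rw [h₁]
    simp only [h₂, h₃, h₄, h0, mE, ofReal_div, ofReal_ofNat, map_add, map_mul, conj_conj]
    ring

theorem polarized_of_h_e_eq_zero (ht : IsTangentGerm f g h e) (hh : h =ᶠ[𝓝 0] 0) (he : e =ᶠ[𝓝 0] 0)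
    {α : Type*} {l : Filter α} {p q : α → E4} (hp : Tendsto p l (𝓝 0)) (hq : Tendsto q l (𝓝 0)) :
    ∀ᶠ x in l, p x 3 - q x 3 = 2 * I * polarQ (p x) (q x) →
      f (p x) * q x 2 + g (p x) * q x 2 ^ 2 + (conjFun f (q x) * p x 2
        + conjFun g (q x) * p x 2 ^ 2) = 0 := by
  have hstar : Tendsto (fun x => star (q x)) l (𝓝 0) :=
    (continuous_star.tendsto' (0 : E4) 0 (star_zero _)).comp hq
  filter_upwards [ht.eventually_eq_of_tendsto hp hq, hp.eventually hh, hp.eventually he,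
    hstar.eventually hh, hstar.eventually he] with x hx h₁ h₂ h₃ h₄ hQ
  have hx := hx hQ
  simp only [h₁, h₂, conjFun, h₃, h₄, Pi.zero_apply, map_zero] at hx
  refine mul_left_cancel₀ (mul_ne_zero two_ne_zero I_ne_zero) ?_
  unfold conjFun
  linear_combination -hx

theorem f_add_g_mul_translate_of_h_e_eq_zero (ht : IsTangentGerm f g h e)
    (hh : h =ᶠ[𝓝 0] 0) (he : e =ᶠ[𝓝 0] 0) :
    ∀ᶠ x : ℂ × E4 in 𝓝 0, ∀ η p s, x = (η, p) → η ≠ 0 →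
      s = p 3 - 2 * I * (p 0 * η + p 1 * η ^ 2) →
      f p + g p * η = f ![0, 0, p 2, s] + g ![0, 0, p 2, s] * η := by
  let s (x : ℂ × E4) : ℂ := x.2 3 - 2 * I * (x.2 0 * x.1 + x.2 1 * x.1 ^ 2)
  have hp : Tendsto (fun x : ℂ × E4 => x.2) (𝓝 0) (𝓝 0) := Continuous.tendsto' (by fun_prop) _ _ rfl
  have hp₀ : Tendsto (fun x : ℂ × E4 => ![0, 0, x.2 2, s x]) (𝓝 0) (𝓝 0) :=
    Continuous.tendsto' (by fun_prop) _ _ (by simp [s])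
  have hq : Tendsto (fun x : ℂ × E4 => ![0, 0, x.1, s x]) (𝓝 0) (𝓝 0) :=
    Continuous.tendsto' (by fun_prop) _ _ (by simp [s])
  filter_upwards [ht.polarized_of_h_e_eq_zero hh he hp hq, ht.polarized_of_h_e_eq_zero hh he hp₀ hq]
  rintro _ h₁ h₂ η p _ rfl hη rfl
  simp only [polarQ, Matrix.cons_val, s] at h₁ h₂
  refine mul_right_cancel₀ hη ?_
  linear_combination h₁ (by ring) - h₂ (by ring)

theorem f_g_translate_of_h_e_eq_zero (ht : IsTangentGerm f g h e) (hh : h =ᶠ[𝓝 0] 0)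
    (he : e =ᶠ[𝓝 0] 0) :
    ∀ᶠ x : ℂ × E4 in 𝓝 0, ∀ η p s, x = (η, p) → η ≠ 0 → s = p 3 - 2 * I * (p 1 * η ^ 2) →
      f ![0, p 1, p 2, p 3] = f ![0, 0, p 2, s] ∧ g ![0, p 1, p 2, p 3] = g ![0, 0, p 2, s] := by
  have hp : Tendsto (fun x : ℂ × E4 => (x.1, ![0, x.2 1, x.2 2, x.2 3])) (𝓝 0) (𝓝 0) :=
    Continuous.tendsto' (by fun_prop) _ _ (by simp)
  have hneg : Tendsto (fun x : ℂ × E4 => (-x.1, ![0, x.2 1, x.2 2, x.2 3])) (𝓝 0) (𝓝 0) :=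
    Continuous.tendsto' (by fun_prop) _ _ (by simp)
  have heq := ht.f_add_g_mul_translate_of_h_e_eq_zero hh he
  filter_upwards [hp.eventually heq, hneg.eventually heq]
  rintro _ h₁ h₂ η p s rfl hη hs
  have h₁ := h₁ _ _ s rfl hη (by simp only [hs, Matrix.cons_val]; ring)
  have h₂ := h₂ _ _ s rfl (neg_ne_zero.2 hη) (by simp only [hs, Matrix.cons_val]; ring)
  simp only [Matrix.cons_val] at h₁ h₂
  exact ⟨by linear_combination (h₁ + h₂) / 2,
    mul_right_cancel₀ hη (by linear_combination (h₁ - h₂) / 2)⟩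

-- For `w = 4 * s / 3` and `z₂ = s / (6 * I * η ^ 2)`, replacing `η` by `2 * η` moves the translate
-- of `w` from `s` to `0`.
theorem f_g_zeta_w_plane_of_h_e_eq_zero (ht : IsTangentGerm f g h e) (hh : h =ᶠ[𝓝 0] 0)
    (he : e =ᶠ[𝓝 0] 0) :
    ∀ᶠ p : E4 in 𝓝 0, f ![0, 0, p 2, p 3] = f ![0, 0, p 2, 0] ∧
      g ![0, 0, p 2, p 3] = g ![0, 0, p 2, 0] := by
  have hdouble : Tendsto (fun x : ℂ × E4 => (2 * x.1, x.2)) (𝓝 0) (𝓝 0) :=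
    Continuous.tendsto' (by fun_prop) _ _ (by simp)
  have heq := ht.f_g_translate_of_h_e_eq_zero hh he
  obtain ⟨η, hη, hx⟩ := exists_ne_zero_eventually (heq.and (hdouble.eventually heq))
  have hp : Tendsto (fun p : E4 => ![0, p 3 / (6 * I * η ^ 2), p 2, 4 / 3 * p 3]) (𝓝 0) (𝓝 0) :=
    Continuous.tendsto' (by fun_prop) _ _ (by simp)
  filter_upwards [hp.eventually hx] with p ⟨h₁, h₂⟩
  have h₁ := h₁ η _ (p 3) rfl hη (by simp only [Matrix.cons_val]; field_simp; ring)
  have h₂ := h₂ (2 * η) _ 0 rfl (mul_ne_zero two_ne_zero hη)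
    (by simp only [Matrix.cons_val]; field_simp; ring)
  exact ⟨h₁.1.symm.trans h₂.1, h₁.2.symm.trans h₂.2⟩

theorem f_g_eq_zeta_of_h_e_eq_zero (ht : IsTangentGerm f g h e)
    (hh : h =ᶠ[𝓝 0] 0) (he : e =ᶠ[𝓝 0] 0) :
    ∀ᶠ p : E4 in 𝓝 0, f p = f ![0, 0, p 2, 0] ∧ g p = g ![0, 0, p 2, 0] := by
  have hp : Tendsto (fun x : ℂ × E4 =>
      ![0, 0, x.2 2, x.2 3 - 2 * I * (x.2 0 * x.1 + x.2 1 * x.1 ^ 2)]) (𝓝 0) (𝓝 0) :=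
    Continuous.tendsto' (by fun_prop) _ _ (by simp)
  have hsum : ∀ᶠ x : ℂ × E4 in 𝓝 0, x.1 ≠ 0 →
      f x.2 + g x.2 * x.1 = f ![0, 0, x.2 2, 0] + g ![0, 0, x.2 2, 0] * x.1 := by
    filter_upwards [ht.f_add_g_mul_translate_of_h_e_eq_zero hh he,
      hp.eventually (ht.f_g_zeta_w_plane_of_h_e_eq_zero hh he)] with x h₁ h₂ hη
    rw [h₁ _ _ _ rfl hη rfl]
    exact congrArg₂ (fun a b => a + b * x.1) h₂.1 h₂.2
  have hneg : Tendsto (fun x : ℂ × E4 => (-x.1, x.2)) (𝓝 0) (𝓝 0) :=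
    Continuous.tendsto' (by fun_prop) _ _ (by simp)
  obtain ⟨η, hη, hx⟩ := exists_ne_zero_eventually (hsum.and (hneg.eventually hsum))
  filter_upwards [hx] with p ⟨h₁, h₂⟩
  have h₁ := h₁ hη
  have h₂ := h₂ (neg_ne_zero.2 hη)
  exact ⟨by linear_combination (h₁ + h₂) / 2,
    mul_right_cancel₀ hη (by linear_combination (h₁ - h₂) / 2)⟩

theorem exists_params_f_g_of_h_e_eq_zero (ht : IsTangentGerm f g h e) (hh : h =ᶠ[𝓝 0] 0)
    (he : e =ᶠ[𝓝 0] 0) :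
    ∃ (κ n : ℝ) (m : ℂ), (∀ᶠ p in 𝓝 0, f p = I * κ * p 2 + m * p 2 ^ 2) ∧
      ∀ᶠ p in 𝓝 0, g p = -conj m * p 2 + I * n * p 2 ^ 2 := by
  have hp : Tendsto (fun x : ℂ × ℂ => ![0, 0, x.2, 0]) (𝓝 0) (𝓝 0) :=
    Continuous.tendsto' (by fun_prop) _ _ (by simp)
  have hq : Tendsto (fun x : ℂ × ℂ => ![0, 0, x.1, 0]) (𝓝 0) (𝓝 0) :=
    Continuous.tendsto' (by fun_prop) _ _ (by simp)
  have hpair : ∀ᶠ x : ℂ × ℂ in 𝓝 0,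
      f ![0, 0, x.2, 0] * x.1 + g ![0, 0, x.2, 0] * x.1 ^ 2 =
        -conjFun f ![0, 0, x.1, 0] * x.2 + -conjFun g ![0, 0, x.1, 0] * x.2 ^ 2 := by
    filter_upwards [ht.polarized_of_h_e_eq_zero hh he hp hq] with x hx
    simp only [polarQ, Matrix.cons_val] at hx
    linear_combination hx (by ring)
  obtain ⟨a, m, b, n, hf, hg⟩ := exists_quadratic_of_separated
    (A := fun y => f ![0, 0, y, 0]) (B := fun y => g ![0, 0, y, 0])
    (u := fun η => -conjFun f ![0, 0, η, 0]) (v := fun η => -conjFun g ![0, 0, η, 0]) hpair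
  have hfst : Tendsto (fun x : ℂ × ℂ => conj x.1) (𝓝 0) (𝓝 0) :=
    Continuous.tendsto' (by fun_prop) _ _ (by simp)
  have hsnd : Tendsto Prod.snd (𝓝 (0 : ℂ × ℂ)) (𝓝 0) := continuous_snd.tendsto' _ _ rfl
  obtain ⟨ha, hb, -, hn⟩ := biquadratic_coeffs_eq_zero (a := a + conj a) (b := b + conj m)
      (c := m + conj b) (d := n + conj n) <| by
    filter_upwards [hpair, hsnd.eventually hf, hsnd.eventually hg, hfst.eventually hf,
      hfst.eventually hg] with x h₁ h₂ h₃ h₄ h₅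
    simp only [conjFun_vec, map_zero] at h₁
    rw [h₂, h₃, h₄, h₅] at h₁
    simp only [map_add, map_mul, map_pow, conj_conj] at h₁
    linear_combination h₁
  have eq_I_mul_im {x : ℂ} (hx : x + conj x = 0) : x = I * x.im := by
    have hre : x.re = 0 := by simpa [Complex.add_conj] using hx
    simpa [hre, mul_comm] using (re_add_im x).symm
  have hζ : Tendsto (fun p : E4 => p 2) (𝓝 0) (𝓝 0) := Continuous.tendsto' (by fun_prop) _ _ rfl
  refine ⟨a.im, n.im, m, ?_, ?_⟩
  · filter_upwards [ht.f_g_eq_zeta_of_h_e_eq_zero hh he, hζ.eventually hf] with p h₁ h₂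
    rw [h₁.1, h₂, ← eq_I_mul_im ha]
  · filter_upwards [ht.f_g_eq_zeta_of_h_e_eq_zero hh he, hζ.eventually hg] with p h₁ h₂
    rw [h₁.2, h₂, ← eq_I_mul_im hn, eq_neg_of_add_eq_zero_left hb]

theorem sub (ht : IsTangentGerm f g h e) {f' g' h' e' : E4 → ℂ} (ht' : IsTangentGerm f' g' h' e') :
    IsTangentGerm (f - f') (g - g') (h - h') (e - e') where
  diff_f := (ht.diff_f.and ht'.diff_f).mono fun _ h => h.1.sub h.2
  diff_g := (ht.diff_g.and ht'.diff_g).mono fun _ h => h.1.sub h.2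
  diff_h := (ht.diff_h.and ht'.diff_h).mono fun _ h => h.1.sub h.2
  diff_e := (ht.diff_e.and ht'.diff_e).mono fun _ h => h.1.sub h.2
  tangent := by
    obtain ⟨V, hV, htan⟩ := ht.tangent
    obtain ⟨V', hV', htan'⟩ := ht'.tangent
    refine ⟨V ∩ V', Filter.inter_mem hV hV', fun p hp => ?_⟩
    simp only [Pi.sub_apply, sub_im, htan p ⟨hp.1, hp.2.1⟩, htan' p ⟨hp.1, hp.2.2⟩,
      ← mul_sub, ← sub_re]
    congr 2
    ring

end IsTangentGerm

section ModelTuples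

variable (P : Params)

theorem differentiable_mF : Differentiable ℂ (mF P) := by unfold mF; fun_prop

theorem differentiable_mG : Differentiable ℂ (mG P) := by unfold mG; fun_prop

theorem differentiable_mH : Differentiable ℂ (mH P) := by unfold mH; fun_prop

theorem differentiable_mE : Differentiable ℂ (mE P) := by unfold mE; fun_prop

theorem tangentOn_model (U : Set E4) : TangentOn (mF P) (mG P) (mH P) (mE P) U := by
  rw [tangentOn_iff]
  rintro p ⟨hp, -⟩
  have hQ := mem_Q_iff.1 hp
  simp only [polarQ, Pi.star_apply, RCLike.star_def] at hQ
  simp only [mE, mF, mG, mH, map_add, map_mul, map_pow, map_sub, conj_conj, conj_I, conj_ofReal,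
    Complex.conj_ofNat]
  linear_combination (3 * (P.l : ℂ) + 2 * I * (conj P.N * p 2 - P.N * conj (p 2))) * hQ

theorem isTangentGerm_model : IsTangentGerm (mF P) (mG P) (mH P) (mE P) where
  diff_f := .of_forall (differentiable_mF P)
  diff_g := .of_forall (differentiable_mG P)
  diff_h := .of_forall (differentiable_mH P)
  diff_e := .of_forall (differentiable_mE P)
  tangent := ⟨Set.univ, Filter.univ_mem, tangentOn_model P _⟩

end ModelTuples

theorem IsTangentGerm.exists_params {f g h e : E4 → ℂ} (ht : IsTangentGerm f g h e) :
    ∃ P : Params, f =ᶠ[𝓝 0] mF P ∧ g =ᶠ[𝓝 0] mG P ∧ h =ᶠ[𝓝 0] mH P ∧ e =ᶠ[𝓝 0] mE P := by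
  obtain ⟨P, hh, he⟩ := ht.exists_params_h_e
  obtain ⟨κ, n, m, hf, hg⟩ := (ht.sub (isTangentGerm_model P)).exists_params_f_g_of_h_e_eq_zero
    hh.sub_eq he.sub_eq
  refine ⟨{ P with κ := P.κ + κ, m := P.m + m, n := P.n + n }, ?_, ?_, hh, he⟩
  · filter_upwards [hf] with p hp
    rw [sub_eq_iff_eq_add.1 hp]
    simp only [mF, ofReal_add]
    ring
  · filter_upwards [hg] with p hp
    rw [sub_eq_iff_eq_add.1 hp]
    simp only [mG, ofReal_add, map_add]
    ring

theorem isTangentGerm_of_tangentOn {U : Set E4} (hUo : IsOpen U) (hU0 : (0 : E4) ∈ U)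
    {f g h e : E4 → ℂ} (hf : DifferentiableOn ℂ f U) (hg : DifferentiableOn ℂ g U)
    (hh : DifferentiableOn ℂ h U) (he : DifferentiableOn ℂ e U) (htan : TangentOn f g h e U) :
    IsTangentGerm f g h e where
  diff_f := hf.eventually_differentiableAt (hUo.mem_nhds hU0)
  diff_g := hg.eventually_differentiableAt (hUo.mem_nhds hU0)
  diff_h := hh.eventually_differentiableAt (hUo.mem_nhds hU0)
  diff_e := he.eventually_differentiableAt (hUo.mem_nhds hU0)
  tangent := ⟨U, hUo.mem_nhds hU0, htan⟩

theorem params_unique {P P' : Params} (hF : mF P =ᶠ[𝓝 0] mF P') (hG : mG P =ᶠ[𝓝 0] mG P')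
    (hH : mH P =ᶠ[𝓝 0] mH P') (hE : mE P =ᶠ[𝓝 0] mE P') : P = P' := by
  have eq_of_eventuallyEq {u v : E4 → ℂ} (hu : Differentiable ℂ u) (hv : Differentiable ℂ v)
      (huv : u =ᶠ[𝓝 0] v) (p : E4) : u p = v p :=
    eqOn_of_preconnected_of_eventuallyEq isOpen_univ isPreconnected_univ hu.differentiableOn
      hv.differentiableOn (Set.mem_univ 0) huv (Set.mem_univ p)
  replace hF := eq_of_eventuallyEq (differentiable_mF P) (differentiable_mF P') hF
  replace hG := eq_of_eventuallyEq (differentiable_mG P) (differentiable_mG P') hG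
  replace hH := eq_of_eventuallyEq (differentiable_mH P) (differentiable_mH P') hH
  replace hE := eq_of_eventuallyEq (differentiable_mE P) (differentiable_mE P') hE
  obtain ⟨d, κ, l, n, a, b, c, m, M, N⟩ := P
  obtain ⟨d', κ', l', n', a', b', c', m', M', N'⟩ := P'
  obtain rfl : a = a' := by simpa [mF] using hF 0
  obtain rfl : b = b' := by simpa [mG] using hG 0
  obtain rfl : c = c' := by simpa [mH] using hH 0
  obtain rfl : d = d' := by simpa [mE] using hE 0
  obtain rfl : N = N' := by simpa [mF] using hF ![0, 0, 0, 1]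
  obtain rfl : M = M' := by simpa [mF] using hF ![1, 0, 0, 0]
  obtain rfl : l = l' := by simpa [mE] using hE ![0, 0, 0, 1]
  have hζ : I * κ + m = I * κ' + m' := by simpa [mF, add_assoc] using hF ![0, 0, 1, 0]
  have hζ' : -(I * κ) + m = -(I * κ') + m' := by simpa [mF, add_assoc] using hF ![0, 0, -1, 0]
  obtain rfl : m = m' := by linear_combination (hζ + hζ') / 2
  obtain rfl : κ = κ' := by simpa using hζ
  obtain rfl : n = n' := by simpa [mG] using hG ![0, 0, 1, 0]
  rfl

/-- The parameters of an infinitesimal automorphism of `Q`, as vectors of a real vector space. -/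
def paramsEquiv : ((Fin 4 → ℝ) × (Fin 6 → ℂ)) ≃ Params where
  toFun x := ⟨x.1 0, x.1 1, x.1 2, x.1 3, x.2 0, x.2 1, x.2 2, x.2 3, x.2 4, x.2 5⟩
  invFun P := (![P.d, P.κ, P.l, P.n], ![P.a, P.b, P.c, P.m, P.M, P.N])
  left_inv x := by ext i <;> fin_cases i <;> rfl
  right_inv _ := rfl

theorem paramsEquiv_apply (x : (Fin 4 → ℝ) × (Fin 6 → ℂ)) : paramsEquiv x =
    ⟨x.1 0, x.1 1, x.1 2, x.1 3, x.2 0, x.2 1, x.2 2, x.2 3, x.2 4, x.2 5⟩ := rfl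

/-- The germs at `0` of the model infinitesimal automorphisms, as a linear map of their
parameters. -/
noncomputable def modelGerms : ((Fin 4 → ℝ) × (Fin 6 → ℂ)) →ₗ[ℝ] G4 × G4 × G4 × G4 where
  toFun x := (mF (paramsEquiv x), mG (paramsEquiv x), mH (paramsEquiv x), mE (paramsEquiv x))
  map_add' x y := by
    simp only [Prod.mk_add_mk, ← Filter.Germ.coe_add]
    congr 4 <;> ext p <;> simp [mF, mG, mH, mE, paramsEquiv_apply] <;> ring
  map_smul' r x := by
    simp only [Prod.smul_mk, RingHom.id_apply, ← Filter.Germ.coe_smul]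
    congr 4 <;> ext p <;> simp [mF, mG, mH, mE, paramsEquiv_apply] <;> ring

theorem modelGerms_injective : Function.Injective modelGerms := fun x y hxy => by
  simp only [modelGerms, LinearMap.coe_mk, AddHom.coe_mk, Prod.mk.injEq, Filter.Germ.coe_eq] at hxy
  exact paramsEquiv.injective (params_unique hxy.1 hxy.2.1 hxy.2.2.1 hxy.2.2.2)

theorem range_modelGerms :
    (LinearMap.range modelGerms : Set (G4 × G4 × G4 × G4)) = tangentGerms := by
  ext t
  constructor
  · rintro ⟨x, rfl⟩
    let P := paramsEquiv x
    exact ⟨_, _, _, _, rfl, Set.univ, isOpen_univ, Set.mem_univ _,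
      (differentiable_mF P).differentiableOn, (differentiable_mG P).differentiableOn,
      (differentiable_mH P).differentiableOn, (differentiable_mE P).differentiableOn,
      tangentOn_model P _⟩
  · rintro ⟨f, g, h, e, rfl, V, hV, h0, hf, hg, hh, he, ht⟩
    obtain ⟨P, hF, hG, hH, hE⟩ := (isTangentGerm_of_tangentOn hV h0 hf hg hh he ht).exists_params
    refine ⟨paramsEquiv.symm P, ?_⟩
    simp only [modelGerms, LinearMap.coe_mk, AddHom.coe_mk, Equiv.apply_symm_apply, Prod.mk.injEq,
      Filter.Germ.coe_eq]
    exact ⟨hF.symm, hG.symm, hH.symm, hE.symm⟩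

theorem rank_range_modelGerms : Module.rank ℝ (LinearMap.range modelGerms) = 16 := by
  have hfinrank : Module.finrank ℝ ((Fin 4 → ℝ) × (Fin 6 → ℂ)) = 16 := by
    simp [Module.finrank_pi_fintype]
  rw [rank_range_of_injective modelGerms modelGerms_injective, ← Module.finrank_eq_rank, hfinrank,
    Nat.cast_ofNat]

theorem existsUnique_params_eqOn {U : Set E4} (hUo : IsOpen U) (hUc : IsPreconnected U)
    (hU0 : (0 : E4) ∈ U) {f g h e : E4 → ℂ}
    (hf : DifferentiableOn ℂ f U) (hg : DifferentiableOn ℂ g U)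
    (hh : DifferentiableOn ℂ h U) (he : DifferentiableOn ℂ e U) (htan : TangentOn f g h e U) :
    ∃! P : Params, ∀ p ∈ U, f p = mF P p ∧ g p = mG P p ∧ h p = mH P p ∧ e p = mE P p := by
  obtain ⟨P, hF, hG, hH, hE⟩ := (isTangentGerm_of_tangentOn hUo hU0 hf hg hh he htan).exists_params
  have eqOn {u v : E4 → ℂ} (hu : DifferentiableOn ℂ u U) (hv : Differentiable ℂ v)
      (huv : u =ᶠ[𝓝 0] v) : Set.EqOn u v U :=
    eqOn_of_preconnected_of_eventuallyEq hUo hUc hu hv.differentiableOn hU0 huv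
  refine ⟨P, fun p hp => ⟨eqOn hf (differentiable_mF P) hF hp, eqOn hg (differentiable_mG P) hG hp,
    eqOn hh (differentiable_mH P) hH hp, eqOn he (differentiable_mE P) hE hp⟩, fun P' hP' => ?_⟩
  have hU : U ∈ 𝓝 0 := hUo.mem_nhds hU0
  refine (params_unique (hF.symm.trans ?_) (hG.symm.trans ?_) (hH.symm.trans ?_)
    (hE.symm.trans ?_)).symm
  · exact Filter.mem_of_superset hU fun p hp => (hP' p hp).1
  · exact Filter.mem_of_superset hU fun p hp => (hP' p hp).2.1
  · exact Filter.mem_of_superset hU fun p hp => (hP' p hp).2.2.1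
  · exact Filter.mem_of_superset hU fun p hp => (hP' p hp).2.2.2

/-- Theorem 15: every holomorphic 4-tuple tangent to `Q` on a connected open
neighborhood `U` of `0` is given by a unique choice of the 16 real parameters; hence the
space of germs at `0` of tangent holomorphic 4-tuples has real dimension exactly 16. -/
theorem stmt_8 (U : Set E4) (hUo : IsOpen U) (hUc : IsConnected U) (hU0 : (0 : E4) ∈ U)
    (f g h e : E4 → ℂ)
    (hf : DifferentiableOn ℂ f U) (hg : DifferentiableOn ℂ g U)
    (hh : DifferentiableOn ℂ h U) (he : DifferentiableOn ℂ e U)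
    (htan : TangentOn f g h e U) :
    (∃! P : Params, ∀ p ∈ U,
      f p = mF P p ∧ g p = mG P p ∧ h p = mH P p ∧ e p = mE P p) ∧
    (∃ W : Submodule ℝ (G4 × G4 × G4 × G4),
      (W : Set (G4 × G4 × G4 × G4)) = tangentGerms ∧ Module.rank ℝ ↥W = 16) := by
  exact ⟨existsUnique_params_eqOn hUo hUc.isPreconnected hU0 hf hg hh he htan,
    LinearMap.range modelGerms, range_modelGerms, rank_range_modelGerms⟩
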